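/- Let μ be a positive Radon measure in ℝⁿ such that μ(L) = 0 for every hyperplane L orthogonal to one of the coordinate axes. If f ∈ BMO(μ) and there exists α ≥ 0 such that d_{f,μ}(λ) = μ({x ∈ ℝⁿ : |f(x)| > λ}) is finite for all λ > α, then f belongs to weak L^∞(μ); in particular there exists M ≥ 0 such that ∫_{{x : |f(x)| > λ}} |f| dμ ≤ (λ + M)·d_{f,μ}(λ) for all λ > α. -/

import Mathlib

open MeasureTheory Set ENNReal

/-- The closed axis-parallel cube with corner `a` and side length `h`. -/
def cube {n : ℕ} (a : Fin n → ℝ) (h : ℝ) : Set (Fin n → ℝ) :=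
  {x | ∀ j, a j ≤ x j ∧ x j ≤ a j + h}

/-- The mean value `f_Q = ⨍_Q f dμ` of `f` over a set `Q`. -/
noncomputable def meanOn {X : Type*} [MeasurableSpace X] (μ : Measure X) (f : X → ℝ)
    (Q : Set X) : ℝ :=
  ⨍ y in Q, f y ∂μ

/-- The distribution function `d_{f,μ}(λ) = μ {x : λ < |f x|}`. -/
noncomputable def distrib {X : Type*} [MeasurableSpace X] (μ : Measure X) (f : X → ℝ)
    (l : ℝ) : ℝ≥0∞ :=
  μ {x | l < |f x|}

/-- The decreasing rearrangement `f*(t) = inf {λ : d_{f,μ}(λ) ≤ t}` (with `inf ∅ = ∞`). -/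
noncomputable def rearr {X : Type*} [MeasurableSpace X] (μ : Measure X) (f : X → ℝ)
    (t : ℝ) : ℝ≥0∞ :=
  sInf {l : ℝ≥0∞ | μ {x | l < ENNReal.ofReal |f x|} ≤ ENNReal.ofReal t}

/-- The maximal function `f**(t) = (1/t) ∫₀ᵗ f*(s) ds`. -/
noncomputable def maxfn {X : Type*} [MeasurableSpace X] (μ : Measure X) (f : X → ℝ)
    (t : ℝ) : ℝ≥0∞ :=
  (∫⁻ s in Set.Ioc (0 : ℝ) t, rearr μ f s) / ENNReal.ofReal t

/-!
The heart of the proof is the estimate `∫ (|f| - l)⁺ dμ ≤ C d(l)` for `l ≥ 0` with `d(l) < ∞`.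
If `2 d(l) < μ(X)`, almost every point of `E = {|f| > l}` is a density point of `E`, while large
balls around it are at most half filled by `E`. As spheres are null, some ball `B` in between is
exactly half filled, so the oscillation of `f` on `B` controls the excess of `|f|` over `l` on
`B`, and the Besicovitch covering theorem sums these local bounds. If `2 d(l) ≥ μ(X)`, then `μ` is
finite, and the first case, applied at a single high level, shows that `f` is integrable.

Since `f*` is equimeasurable with `f`, the estimate at `l = f*(t)`, where `d(l) ≤ t`, yields
`t f**(t) ≤ t f*(t) + C t`.
-/

open Filter Topology Metric
open scoped NNReal

section Rearrangement

variable {X : Type*} [MeasurableSpace X] {μ : Measure X} {f : X → ℝ} {l t : ℝ}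

/-- The integral `∫ (|f| - l)⁺ dμ` of the part of `|f|` above the level `l`; `ENNReal.ofReal` takes
the positive part. -/
noncomputable def excess (μ : Measure X) (f : X → ℝ) (l : ℝ) : ℝ≥0∞ :=
  ∫⁻ x, ENNReal.ofReal (|f x| - l) ∂μ

lemma tendsto_distrib_atTop (hf : Measurable f) (hl : distrib μ f l ≠ ⊤) :
    Tendsto (distrib μ f) atTop (𝓝 0) := by
  have hempty : ⋂ u : ℝ, {x | u < |f x|} = ∅ :=
    eq_empty_iff_forall_notMem.2 fun x hx => lt_irrefl |f x| (mem_iInter.1 hx |f x|)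
  rw [← measure_empty (μ := μ), ← hempty]
  exact tendsto_measure_iInter_atTop
    (fun _ => (measurableSet_lt measurable_const hf.abs).nullMeasurableSet)
    (fun _ _ h _ hx => h.trans_lt hx) ⟨l, hl⟩

lemma rearr_antitone (μ : Measure X) (f : X → ℝ) : Antitone (rearr μ f) :=
  fun _ _ h => sInf_le_sInf fun _ hl => le_trans hl (ENNReal.ofReal_le_ofReal h)

lemma distrib_le_of_rearr_lt (hl : 0 ≤ l) (h : rearr μ f t < ENNReal.ofReal l) :
    distrib μ f l ≤ ENNReal.ofReal t := by
  obtain ⟨v, hv, hvl⟩ := sInf_lt_iff.1 h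
  refine le_trans (measure_mono fun x hx => ?_) hv
  exact hvl.trans ((ENNReal.ofReal_lt_ofReal_iff_of_nonneg hl).2 hx)

lemma rearr_le_ofReal_iff (hl : 0 ≤ l) :
    rearr μ f t ≤ ENNReal.ofReal l ↔ distrib μ f l ≤ ENNReal.ofReal t := by
  constructor
  · intro h
    obtain ⟨u, hu, hlu, hul⟩ := exists_seq_strictAnti_tendsto l
    have hunion : {x | l < |f x|} = ⋃ k, {x | u k < |f x|} := by
      ext x
      simp only [mem_iUnion, mem_ofPred_eq]
      exact ⟨fun hx => (hul.eventually_lt_const hx).exists, fun ⟨k, hk⟩ => (hlu k).trans hk⟩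
    have hmono : Monotone fun k => {x | u k < |f x|} :=
      fun _ _ hij _ hx => (hu.antitone hij).trans_lt hx
    rw [distrib, hunion, hmono.measure_iUnion]
    refine iSup_le fun k => distrib_le_of_rearr_lt (hl.trans (hlu k).le) (h.trans_lt ?_)
    exact (ENNReal.ofReal_lt_ofReal_iff_of_nonneg hl).2 (hlu k)
  · intro h
    refine sInf_le (le_trans (measure_mono fun x hx => ?_) h)
    exact (ENNReal.ofReal_lt_ofReal_iff_of_nonneg hl).1 hx

lemma rearr_ne_top (hf : Measurable f) (hl : distrib μ f l ≠ ⊤) (ht : 0 < t) :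
    rearr μ f t ≠ ⊤ := by
  obtain ⟨u, hut, hu0⟩ := (((tendsto_distrib_atTop hf hl).eventually_lt_const
    (ENNReal.ofReal_pos.2 ht)).and (eventually_ge_atTop 0)).exists
  exact ne_top_of_le_ne_top ENNReal.ofReal_ne_top ((rearr_le_ofReal_iff hu0).2 hut.le)

lemma volume_setOf_pos_ofReal_lt (a : ℝ≥0∞) :
    volume {s : ℝ | 0 < s ∧ ENNReal.ofReal s < a} = a := by
  rcases eq_or_ne a ⊤ with rfl | ha
  · simp only [ENNReal.ofReal_lt_top, and_true]
    exact Real.volume_Ioi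
  · have hIoo : {s : ℝ | 0 < s ∧ ENNReal.ofReal s < a} = Ioo 0 a.toReal :=
      ext fun s => and_congr_right fun hs => ENNReal.ofReal_lt_iff_lt_toReal hs.le ha
    rw [hIoo, Real.volume_Ioo, sub_zero, ENNReal.ofReal_toReal ha]

lemma distrib_toReal_rearr (hfin : ∀ s : ℝ, 0 < s → rearr μ f s ≠ ⊤) (hl : 0 ≤ l) :
    distrib (volume.restrict (Ioi 0)) (fun s => (rearr μ f s).toReal) l = distrib μ f l := by
  rw [distrib, Measure.restrict_apply' measurableSet_Ioi,
    ← volume_setOf_pos_ofReal_lt (distrib μ f l)]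
  congr 1
  ext s
  rw [inter_comm]
  refine and_congr_right fun hs : 0 < s => ?_
  rw [mem_ofPred_eq, abs_of_nonneg ENNReal.toReal_nonneg,
    ← ENNReal.ofReal_lt_iff_lt_toReal hl (hfin s hs), ← not_le, rearr_le_ofReal_iff hl, not_le]

lemma excess_eq_lintegral_distrib (hf : AEMeasurable f μ) (l : ℝ) :
    excess μ f l = ∫⁻ u in Ioi 0, distrib μ f (l + u) := by
  have hcake := lintegral_eq_lintegral_meas_lt μ (f := fun x => max (|f x| - l) 0)
    (ae_of_all _ fun _ => le_max_right _ _) (by fun_prop)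
  simp only [ENNReal.ofReal_max, ENNReal.ofReal_zero, max_zero] at hcake
  rw [excess, hcake]
  refine setLIntegral_congr_fun measurableSet_Ioi fun u hu => congrArg μ (ext fun x => ?_)
  simp only [mem_ofPred_eq, lt_max_iff, not_lt_of_gt (mem_Ioi.1 hu), or_false, lt_sub_iff_add_lt']

lemma excess_toReal_rearr (hf : Measurable f) (hfin : ∀ s : ℝ, 0 < s → rearr μ f s ≠ ⊤)
    (hl : 0 ≤ l) :
    excess (volume.restrict (Ioi 0)) (fun s => (rearr μ f s).toReal) l = excess μ f l := by
  rw [excess_eq_lintegral_distrib hf.aemeasurable, excess_eq_lintegral_distrib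
    (rearr_antitone μ f).measurable.ennreal_toReal.aemeasurable]
  exact setLIntegral_congr_fun measurableSet_Ioi fun u hu =>
    distrib_toReal_rearr hfin (add_nonneg hl (mem_Ioi.1 hu).le)

lemma lintegral_ofReal_abs_le_add_excess (μ : Measure X) (f : X → ℝ) (l : ℝ) :
    ∫⁻ x, ENNReal.ofReal |f x| ∂μ ≤ ENNReal.ofReal l * μ univ + excess μ f l := by
  rw [← lintegral_const, excess, ← lintegral_add_left measurable_const]
  refine lintegral_mono fun x => ?_
  simpa using ENNReal.ofReal_add_le (p := l) (q := |f x| - l)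

lemma excess_mono_measure {ν : Measure X} (h : ν ≤ μ) (f : X → ℝ) (l : ℝ) :
    excess ν f l ≤ excess μ f l :=
  lintegral_mono' h le_rfl

lemma lintegral_Ioc_rearr_le (hf : Measurable f) (hfin : ∀ s : ℝ, 0 < s → rearr μ f s ≠ ⊤)
    (hl : 0 ≤ l) (t : ℝ) :
    ∫⁻ s in Ioc 0 t, rearr μ f s ≤
      ENNReal.ofReal l * ENNReal.ofReal t + excess μ f l := by
  calc ∫⁻ s in Ioc 0 t, rearr μ f s
      = ∫⁻ s in Ioc 0 t, ENNReal.ofReal |(rearr μ f s).toReal| :=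
        setLIntegral_congr_fun measurableSet_Ioc fun s hs => by
          rw [abs_of_nonneg ENNReal.toReal_nonneg, ENNReal.ofReal_toReal (hfin s hs.1)]
    _ ≤ ENNReal.ofReal l * ENNReal.ofReal t +
          excess (volume.restrict (Ioc 0 t)) (fun s => (rearr μ f s).toReal) l := by
        simpa using lintegral_ofReal_abs_le_add_excess (volume.restrict (Ioc 0 t))
          (fun s => (rearr μ f s).toReal) l
    _ ≤ ENNReal.ofReal l * ENNReal.ofReal t + excess μ f l := by
        rw [← excess_toReal_rearr hf hfin hl]
        exact add_le_add_right (excess_mono_measure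
          (Measure.restrict_mono Ioc_subset_Ioi_self le_rfl) _ _) _

lemma maxfn_sub_rearr_le (hf : Measurable f) (hfin : ∀ s : ℝ, 0 < s → rearr μ f s ≠ ⊤)
    {C : ℝ≥0∞} (ht : 0 < t)
    (hC : excess μ f (rearr μ f t).toReal ≤ C * distrib μ f (rearr μ f t).toReal) :
    maxfn μ f t - rearr μ f t ≤ C := by
  have hF0 : 0 ≤ (rearr μ f t).toReal := ENNReal.toReal_nonneg
  have hF : ENNReal.ofReal (rearr μ f t).toReal = rearr μ f t := ENNReal.ofReal_toReal (hfin t ht)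
  have hdist : distrib μ f (rearr μ f t).toReal ≤ ENNReal.ofReal t :=
    (rearr_le_ofReal_iff hF0).1 hF.ge
  rw [tsub_le_iff_left, maxfn,
    ENNReal.div_le_iff (ENNReal.ofReal_pos.2 ht).ne' ENNReal.ofReal_ne_top]
  calc ∫⁻ s in Ioc 0 t, rearr μ f s
      ≤ rearr μ f t * ENNReal.ofReal t + excess μ f (rearr μ f t).toReal := by
        simpa only [hF] using lintegral_Ioc_rearr_le hf hfin hF0 t
    _ ≤ rearr μ f t * ENNReal.ofReal t + C * ENNReal.ofReal t := by
        gcongr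
        exact hC.trans (by gcongr)
    _ = (rearr μ f t + C) * ENNReal.ofReal t := (add_mul _ _ _).symm

lemma setLIntegral_ofReal_abs_le_of_excess_le {C : ℝ≥0∞}
    (hC : excess μ f l ≤ C * distrib μ f l) :
    ∫⁻ x in {x | l < |f x|}, ENNReal.ofReal |f x| ∂μ ≤
      (ENNReal.ofReal l + C) * distrib μ f l := by
  refine (lintegral_ofReal_abs_le_add_excess _ f l).trans ?_
  rw [Measure.restrict_apply_univ, add_mul]
  exact add_le_add_right ((excess_mono_measure Measure.restrict_le_self f l).trans hC) _

end Rearrangement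

section Oscillation

variable {X : Type*} [MeasurableSpace X] {μ : Measure X} {f : X → ℝ}

lemma setLIntegral_ofReal_abs_sub_le_of_setAverage_le {s : Set X} {c K : ℝ} (hs : μ s ≠ ⊤)
    (hf : IntegrableOn f s μ) (hK : 0 < μ s → ⨍ y in s, |f y - c| ∂μ ≤ K) :
    ∫⁻ y in s, ENNReal.ofReal |f y - c| ∂μ ≤ ENNReal.ofReal K * μ s := by
  rcases eq_zero_or_pos (μ s) with h0 | hpos
  · simp [Measure.restrict_eq_zero.2 h0]
  have hint : IntegrableOn (fun y => |f y - c|) s μ :=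
    (hf.sub (integrableOn_const hs)).abs
  rw [← ENNReal.div_le_iff hpos.ne' hs,
    ← ofReal_setAverage hint (ae_of_all _ fun _ => abs_nonneg _)]
  exact ENNReal.ofReal_le_ofReal (hK hpos)

lemma excess_restrict_le_setLIntegral_ofReal_abs_sub (hf : Measurable f) {Q : Set X} {l : ℝ}
    (hhalf : μ (Q ∩ {x | l < |f x|}) ≤ μ (Q \ {x | l < |f x|})) (c : ℝ) :
    excess (μ.restrict Q) f l ≤ ∫⁻ y in Q, ENNReal.ofReal |f y - c| ∂μ := by
  set E := {x | l < |f x|}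
  have hE : MeasurableSet E := measurableSet_lt measurable_const hf.abs
  have hosc : Measurable fun y => ENNReal.ofReal |f y - c| := by fun_prop
  have hzero : ∫⁻ y in Q \ E, ENNReal.ofReal (|f y| - l) ∂μ = 0 := by
    refine le_antisymm ((setLIntegral_mono measurable_const fun y hy => ?_).trans_eq
      lintegral_zero) bot_le
    exact (ENNReal.ofReal_of_nonpos (sub_nonpos.2 (not_lt.1 hy.2))).le
  rw [excess, ← lintegral_inter_add_sdiff _ Q hE, ← lintegral_inter_add_sdiff _ Q hE, hzero,
    add_zero]
  calc ∫⁻ y in Q ∩ E, ENNReal.ofReal (|f y| - l) ∂μ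
      ≤ ∫⁻ y in Q ∩ E, (ENNReal.ofReal |f y - c| + ENNReal.ofReal (|c| - l)) ∂μ := by
        refine lintegral_mono fun y => (ENNReal.ofReal_le_ofReal ?_).trans ENNReal.ofReal_add_le
        linarith [abs_sub_abs_le_abs_sub (f y) c]
    _ = ∫⁻ y in Q ∩ E, ENNReal.ofReal |f y - c| ∂μ + ENNReal.ofReal (|c| - l) * μ (Q ∩ E) := by
        rw [lintegral_add_left hosc, setLIntegral_const]
    _ ≤ ∫⁻ y in Q ∩ E, ENNReal.ofReal |f y - c| ∂μ + ENNReal.ofReal (|c| - l) * μ (Q \ E) := by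
        gcongr
    _ ≤ ∫⁻ y in Q ∩ E, ENNReal.ofReal |f y - c| ∂μ +
          ∫⁻ y in Q \ E, ENNReal.ofReal |f y - c| ∂μ := by
        rw [← setLIntegral_const]
        refine add_le_add_right (setLIntegral_mono hosc fun y hy => ENNReal.ofReal_le_ofReal ?_) _
        have hfy : |f y| ≤ l := not_lt.1 hy.2
        linarith [abs_sub_abs_le_abs_sub c (f y), abs_sub_comm c (f y)]

end Oscillation

section HalfFilledBalls

lemma exists_pos_lt_measure_closedBall {X : Type*} [PseudoMetricSpace X] [MeasurableSpace X]
    {μ : Measure X} (x : X) {a : ℝ≥0∞} (ha : a < μ univ) :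
    ∃ R, 0 < R ∧ a < μ (closedBall x R) := by
  have htendsto : Tendsto (fun k : ℕ => μ (closedBall x k)) atTop (𝓝 (μ univ)) := by
    rw [← iUnion_closedBall_nat x]
    exact tendsto_measure_iUnion_atTop fun i j hij =>
      closedBall_subset_closedBall (Nat.cast_le.2 hij)
  obtain ⟨k, hak, hk⟩ := ((htendsto.eventually_const_lt ha).and (eventually_gt_atTop 0)).exists
  exact ⟨k, Nat.cast_pos.2 hk, hak⟩

lemma exists_measure_closedBall_le_two_mul {X : Type*} [PseudoMetricSpace X] [MeasurableSpace X]
    {μ : Measure X} {E : Set X} {x : X} {R : ℝ} (hR : 0 < R)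
    (hx : Tendsto (fun r => μ (E ∩ closedBall x r) / μ (closedBall x r)) (𝓝[>] 0) (𝓝 1)) :
    ∃ s ∈ Ioo 0 R, μ (closedBall x s) ≤ 2 * μ (closedBall x s ∩ E) := by
  obtain ⟨s, hs, hsR⟩ := ((hx.eventually_const_lt (u := 2⁻¹) (by simp)).and
    (Ioo_mem_nhdsGT hR)).exists
  refine ⟨s, hsR, ?_⟩
  rw [inter_comm, ← ENNReal.inv_mul_le_iff two_ne_zero ofNat_ne_top]
  exact ENNReal.mul_le_of_le_div hs.le

variable {X : Type*} [PseudoMetricSpace X] [ProperSpace X] [MeasurableSpace X]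
  [OpensMeasurableSpace X] {μ ν : Measure X} [IsLocallyFiniteMeasure μ] [IsLocallyFiniteMeasure ν]

lemma continuousAt_measureReal_closedBall {x : X} {r : ℝ} (hr : μ (sphere x r) = 0) :
    ContinuousAt (fun r => μ.real (closedBall x r)) r := by
  refine (ENNReal.tendsto_toReal measure_closedBall_lt_top.ne).comp ?_
  refine tendsto_measure_of_ae_tendsto_indicator (𝓝 r) measurableSet_closedBall
    (fun _ => measurableSet_closedBall) (B := closedBall x (r + 1)) measurableSet_closedBall
    measure_closedBall_lt_top.ne ?_ ?_
  · filter_upwards [eventually_lt_nhds (lt_add_one r)] with s hs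
    exact closedBall_subset_closedBall hs.le
  · filter_upwards [measure_eq_zero_iff_ae_notMem.1 hr] with y hy
    rcases lt_or_gt_of_ne hy with h | h
    · filter_upwards [eventually_gt_nhds h] with s hs
      simp only [mem_closedBall, hs.le, h.le]
    · filter_upwards [eventually_lt_nhds h] with s hs
      simp only [mem_closedBall, not_le.2 hs, not_le.2 h]

lemma exists_measure_closedBall_eq {x : X} {s R : ℝ} (hsR : s ≤ R)
    (hμ : ∀ r ∈ Icc s R, μ (sphere x r) = 0) (hν : ∀ r ∈ Icc s R, ν (sphere x r) = 0)
    (hs : μ (closedBall x s) ≤ ν (closedBall x s))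
    (hR : ν (closedBall x R) ≤ μ (closedBall x R)) :
    ∃ r ∈ Icc s R, μ (closedBall x r) = ν (closedBall x r) := by
  obtain ⟨r, hr, heq⟩ := isPreconnected_Icc.intermediate_value₂ (left_mem_Icc.2 hsR)
    (right_mem_Icc.2 hsR)
    (fun r hr => (continuousAt_measureReal_closedBall (hμ r hr)).continuousWithinAt)
    (fun r hr => (continuousAt_measureReal_closedBall (hν r hr)).continuousWithinAt)
    (ENNReal.toReal_mono measure_closedBall_lt_top.ne hs)
    (ENNReal.toReal_mono measure_closedBall_lt_top.ne hR)
  exact ⟨r, hr, (measureReal_eq_measureReal_iff measure_closedBall_lt_top.ne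
    measure_closedBall_lt_top.ne).1 heq⟩

lemma exists_measure_closedBall_eq_two_mul {E : Set X} {x : X}
    (hsphere : ∀ r, 0 < r → μ (sphere x r) = 0)
    (hx : Tendsto (fun r => μ (E ∩ closedBall x r) / μ (closedBall x r)) (𝓝[>] 0) (𝓝 1))
    (hE : 2 * μ E < μ univ) :
    ∃ r, 0 < r ∧ μ (closedBall x r) = 2 * μ (closedBall x r ∩ E) := by
  obtain ⟨R, hR0, hR⟩ := exists_pos_lt_measure_closedBall x hE
  obtain ⟨s, ⟨hs0, hsR⟩, hs⟩ := exists_measure_closedBall_le_two_mul hR0 hx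
  have happly (r : ℝ) :
      ((2 : ℝ≥0) • μ.restrict E) (closedBall x r) = 2 * μ (closedBall x r ∩ E) := by
    simp [Measure.restrict_apply measurableSet_closedBall, ENNReal.smul_def]
  have hnull (r : ℝ) (hr : r ∈ Icc s R) : μ (sphere x r) = 0 := hsphere r (hs0.trans_le hr.1)
  obtain ⟨r, hr, heq⟩ := exists_measure_closedBall_eq (μ := μ) (ν := (2 : ℝ≥0) • μ.restrict E)
    hsR.le hnull
    (fun r hr => by
      rw [Measure.smul_apply, Measure.absolutelyContinuous_restrict (hnull r hr), smul_zero])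
    (hs.trans_eq (happly s).symm)
    ((happly R).trans_le ((mul_le_mul_right (measure_mono inter_subset_right) 2).trans hR.le))
  exact ⟨r, hs0.trans_le hr.1, heq.trans (happly r)⟩

end HalfFilledBalls

section Besicovitch

variable {X : Type*} [MetricSpace X] [SecondCountableTopology X] [MeasurableSpace X]
  [OpensMeasurableSpace X]

lemma measure_le_mul_of_closedBall_of_radius_le {N : ℕ} {τ : ℝ} (hτ : 1 < τ)
    (hN : IsEmpty (Besicovitch.SatelliteConfig X N τ)) {ν μ : Measure X} {A : Set X} {R : ℝ}
    (hA : ∀ x ∈ A, ∃ r, 0 < r ∧ r ≤ R ∧ ν (closedBall x r) ≤ μ (closedBall x r)) :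
    ν A ≤ N * μ univ := by
  choose! r hr0 hrR hr using hA
  let q : Besicovitch.BallPackage A X :=
    ⟨Subtype.val, fun x => r x, fun x => hr0 x x.2, R, fun x => hrR x x.2⟩
  obtain ⟨s, hdisj, hcover⟩ := Besicovitch.exist_disjoint_covering_families hτ hN q
  have hcount (i : Fin N) : (s i).Countable := (hdisj i).countable_of_nonempty_interior
    fun x _ => (nonempty_ball.2 (q.rpos x)).mono ball_subset_interior_closedBall
  have hfamily (i : Fin N) : ν (⋃ x ∈ s i, closedBall (q.c x) (q.r x)) ≤ μ univ :=
    calc ν (⋃ x ∈ s i, closedBall (q.c x) (q.r x))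
        ≤ ∑' x : s i, ν (closedBall (q.c x) (q.r x)) := measure_biUnion_le ν (hcount i) _
      _ ≤ ∑' x : s i, μ (closedBall (q.c x) (q.r x)) :=
        ENNReal.tsum_le_tsum fun x => hr x.1 x.1.2
      _ = μ (⋃ x ∈ s i, closedBall (q.c x) (q.r x)) :=
        (measure_biUnion (hcount i) (hdisj i) fun _ _ => measurableSet_closedBall).symm
      _ ≤ μ univ := measure_mono (subset_univ _)
  have hsub : A ⊆ ⋃ i, ⋃ x ∈ s i, closedBall (q.c x) (q.r x) := fun x hx =>
    iUnion_mono (fun _ => iUnion₂_mono fun _ _ => ball_subset_closedBall)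
      (hcover (mem_range_self (⟨x, hx⟩ : A)))
  calc ν A ≤ ∑ i, ν (⋃ x ∈ s i, closedBall (q.c x) (q.r x)) :=
        (measure_mono hsub).trans (measure_iUnion_fintype_le ν _)
    _ ≤ ∑ _i : Fin N, μ univ := Finset.sum_le_sum fun i _ => hfamily i
    _ = N * μ univ := by simp

variable (X) in
lemma exists_forall_measure_univ_le_of_ae_closedBall [HasBesicovitchCovering X] :
    ∃ N : ℕ, ∀ ν μ : Measure X,
      (∀ᵐ x ∂ν, ∃ r, 0 < r ∧ ν (closedBall x r) ≤ μ (closedBall x r)) →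
        ν univ ≤ N * μ univ := by
  obtain ⟨N, τ, hτ, hN⟩ := HasBesicovitchCovering.no_satelliteConfig (α := X)
  refine ⟨N, fun ν μ h => ?_⟩
  let A (k : ℕ) : Set X :=
    {x | ∃ r : ℝ, 0 < r ∧ r ≤ k ∧ ν (closedBall x r) ≤ μ (closedBall x r)}
  have hmono : Monotone A := fun i j hij x ⟨r, hr0, hri, hr⟩ =>
    ⟨r, hr0, hri.trans (Nat.cast_le.2 hij), hr⟩
  have hA : (⋃ k, A k) =ᵐ[ν] univ := by
    refine eventuallyEq_univ.2 (h.mono fun x ⟨r, hr0, hr⟩ => ?_)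
    obtain ⟨k, hk⟩ := exists_nat_ge r
    exact mem_iUnion.2 ⟨k, r, hr0, hk, hr⟩
  rw [← measure_congr hA, hmono.measure_iUnion]
  exact iSup_le fun k => measure_le_mul_of_closedBall_of_radius_le hτ hN fun x hx => hx

end Besicovitch

section BoundedMeanOscillation

/-- `f` has mean oscillation at most `K` on balls: this is bounded mean oscillation with respect
to `μ`, with closed balls in place of cubes (the two agree on `Fin n → ℝ`, which carries the sup
norm). An arbitrary constant takes the place of the mean of `f`, and the inequality is multiplied
out, so that balls of measure zero impose no condition. -/
def HasBallOscillationLE {X : Type*} [PseudoMetricSpace X] [MeasurableSpace X] (μ : Measure X)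
    (f : X → ℝ) (K : ℝ≥0) : Prop :=
  ∀ (x : X) (r : ℝ), 0 < r → ∃ c : ℝ,
    ∫⁻ y in closedBall x r, ENNReal.ofReal |f y - c| ∂μ ≤ K * μ (closedBall x r)

variable {X : Type*} [MetricSpace X] [ProperSpace X] [HasBesicovitchCovering X]
  [MeasurableSpace X] [BorelSpace X] {μ : Measure X} {f : X → ℝ} {K : ℝ≥0}

lemma ae_exists_closedBall_excess_le [IsLocallyFiniteMeasure μ]
    (hsphere : ∀ (x : X) (r : ℝ), 0 < r → μ (sphere x r) = 0)
    (hf : Measurable f) (hosc : HasBallOscillationLE μ f K) {l : ℝ}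
    (hl : 2 * distrib μ f l < μ univ) :
    ∀ᵐ x ∂μ, l < |f x| → ∃ r, 0 < r ∧
      excess (μ.restrict (closedBall x r)) f l ≤
        2 * K * μ (closedBall x r ∩ {x | l < |f x|}) := by
  set E := {x | l < |f x|}
  have hE : MeasurableSet E := measurableSet_lt measurable_const hf.abs
  filter_upwards [Besicovitch.ae_tendsto_measure_inter_div_of_measurableSet μ hE] with x hx hxE
  rw [indicator_of_mem (show x ∈ E from hxE)] at hx
  obtain ⟨r, hr0, hr⟩ := exists_measure_closedBall_eq_two_mul (hsphere x) hx hl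
  obtain ⟨c, hc⟩ := hosc x r hr0
  have hhalf : μ (closedBall x r ∩ E) = μ (closedBall x r \ E) := by
    rw [← measure_inter_add_sdiff (closedBall x r) hE, two_mul] at hr
    exact ((ENNReal.add_right_inj
      (measure_ne_top_of_subset inter_subset_left measure_closedBall_lt_top.ne)).1 hr).symm
  refine ⟨r, hr0, ?_⟩
  calc excess (μ.restrict (closedBall x r)) f l
      ≤ ∫⁻ y in closedBall x r, ENNReal.ofReal |f y - c| ∂μ :=
        excess_restrict_le_setLIntegral_ofReal_abs_sub hf hhalf.le c
    _ ≤ K * μ (closedBall x r) := hc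
    _ = 2 * K * μ (closedBall x r ∩ E) := by rw [hr, mul_left_comm, mul_assoc]

lemma exists_excess_le_of_two_mul_distrib_lt [IsLocallyFiniteMeasure μ]
    (hsphere : ∀ (x : X) (r : ℝ), 0 < r → μ (sphere x r) = 0)
    (hf : Measurable f) (hosc : HasBallOscillationLE μ f K) :
    ∃ C : ℝ≥0, ∀ l : ℝ, 2 * distrib μ f l < μ univ → excess μ f l ≤ C * distrib μ f l := by
  obtain ⟨N, hN⟩ := exists_forall_measure_univ_le_of_ae_closedBall X
  refine ⟨N * (2 * K), fun l hl => ?_⟩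
  let ν := μ.withDensity fun x => ENNReal.ofReal (|f x| - l)
  let κ := (2 * K) • μ.restrict {x | l < |f x|}
  have hball : ∀ᵐ x ∂ν, ∃ r, 0 < r ∧ ν (closedBall x r) ≤ κ (closedBall x r) := by
    rw [ae_withDensity_iff (by fun_prop)]
    filter_upwards [ae_exists_closedBall_excess_le hsphere hf hosc hl] with x hx hx0
    obtain ⟨r, hr0, hr⟩ := hx (sub_pos.1 (ENNReal.ofReal_pos.1 (pos_iff_ne_zero.2 hx0)))
    refine ⟨r, hr0, ?_⟩
    simpa [ν, κ, excess, withDensity_apply _ measurableSet_closedBall,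
      Measure.restrict_apply measurableSet_closedBall, ENNReal.smul_def] using hr
  simpa [ν, κ, excess, distrib, ENNReal.smul_def, mul_assoc] using hN ν κ hball

lemma HasBallOscillationLE.lintegral_ofReal_abs_ne_top [IsFiniteMeasure μ]
    (hsphere : ∀ (x : X) (r : ℝ), 0 < r → μ (sphere x r) = 0)
    (hf : Measurable f) (hosc : HasBallOscillationLE μ f K) :
    ∫⁻ x, ENNReal.ofReal |f x| ∂μ ≠ ⊤ := by
  rcases eq_zero_or_neZero μ with rfl | hμ
  · simp
  obtain ⟨C, hC⟩ := exists_excess_le_of_two_mul_distrib_lt hsphere hf hosc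
  have hlim : Tendsto (fun l => 2 * distrib μ f l) atTop (𝓝 0) := by
    simpa using ENNReal.Tendsto.const_mul
      (tendsto_distrib_atTop hf (measure_ne_top μ {x | 0 < |f x|})) (Or.inr ofNat_ne_top)
  obtain ⟨l, hl⟩ := (hlim.eventually_lt_const (Measure.measure_univ_pos.2 hμ.out)).exists
  refine ne_top_of_le_ne_top ?_
    ((lintegral_ofReal_abs_le_add_excess μ f l).trans (add_le_add_right (hC l hl) _))
  have hdist : distrib μ f l ≠ ⊤ := measure_ne_top μ _
  finiteness

lemma exists_excess_le_of_isFiniteMeasure [IsFiniteMeasure μ]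
    (hsphere : ∀ (x : X) (r : ℝ), 0 < r → μ (sphere x r) = 0)
    (hf : Measurable f) (hosc : HasBallOscillationLE μ f K) :
    ∃ C : ℝ≥0, ∀ l : ℝ, 0 ≤ l → excess μ f l ≤ C * distrib μ f l := by
  rcases eq_zero_or_neZero μ with rfl | hμ
  · exact ⟨0, fun l _ => by simp [excess]⟩
  obtain ⟨C, hC⟩ := exists_excess_le_of_two_mul_distrib_lt hsphere hf hosc
  have huniv : μ univ ≠ 0 := (Measure.measure_univ_pos.2 hμ.out).ne'
  obtain ⟨D, hD⟩ : ∃ D : ℝ≥0, (D : ℝ≥0∞) = (∫⁻ x, ENNReal.ofReal |f x| ∂μ) / μ univ :=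
    ⟨_, ENNReal.coe_toNNReal
      (ENNReal.div_ne_top (hosc.lintegral_ofReal_abs_ne_top hsphere hf) huniv)⟩
  refine ⟨max C (D * 2), fun l hl => ?_⟩
  rcases lt_or_ge (2 * distrib μ f l) (μ univ) with hsmall | hlarge
  · refine (hC l hsmall).trans ?_
    gcongr
    exact le_max_left _ _
  · calc excess μ f l
        ≤ ∫⁻ x, ENNReal.ofReal |f x| ∂μ :=
          lintegral_mono fun x => ENNReal.ofReal_le_ofReal (sub_le_self _ hl)
      _ = D * μ univ := by rw [hD, ENNReal.div_mul_cancel huniv (measure_ne_top μ univ)]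
      _ ≤ D * (2 * distrib μ f l) := by gcongr
      _ = (D * 2 : ℝ≥0) * distrib μ f l := by push_cast; rw [mul_assoc]
      _ ≤ (max C (D * 2) : ℝ≥0) * distrib μ f l := by
          gcongr
          exact le_max_right _ _

lemma exists_excess_le_of_distrib_ne_top [IsLocallyFiniteMeasure μ]
    (hsphere : ∀ (x : X) (r : ℝ), 0 < r → μ (sphere x r) = 0)
    (hf : Measurable f) (hosc : HasBallOscillationLE μ f K) :
    ∃ C : ℝ≥0, ∀ l : ℝ, 0 ≤ l → distrib μ f l ≠ ⊤ → excess μ f l ≤ C * distrib μ f l := by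
  by_cases hfin : IsFiniteMeasure μ
  · obtain ⟨C, hC⟩ := exists_excess_le_of_isFiniteMeasure hsphere hf hosc
    exact ⟨C, fun l hl _ => hC l hl⟩
  · have huniv : μ univ = ⊤ := not_lt_top_iff.1 fun h => hfin ⟨h⟩
    obtain ⟨C, hC⟩ := exists_excess_le_of_two_mul_distrib_lt hsphere hf hosc
    exact ⟨C, fun l _ hl => hC l (huniv ▸ by finiteness)⟩

theorem stmt19_general [IsLocallyFiniteMeasure μ]
    (hsphere : ∀ (x : X) (r : ℝ), 0 < r → μ (sphere x r) = 0)
    (hf : Measurable f) (hosc : HasBallOscillationLE μ f K) (hdist : ∃ l, distrib μ f l < ⊤) :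
    (∀ t : ℝ, 0 < t → rearr μ f t ≠ ⊤) ∧
    ∃ M : ℝ, 0 ≤ M ∧
      (∀ t : ℝ, 0 < t → maxfn μ f t - rearr μ f t ≤ ENNReal.ofReal M) ∧
      ∀ l : ℝ, 0 ≤ l → distrib μ f l < ⊤ →
        ∫⁻ x in {x | l < |f x|}, ENNReal.ofReal |f x| ∂μ ≤
          ENNReal.ofReal (l + M) * distrib μ f l := by
  obtain ⟨l₀, hl₀⟩ := hdist
  have hfin : ∀ t : ℝ, 0 < t → rearr μ f t ≠ ⊤ := fun t ht => rearr_ne_top hf hl₀.ne ht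
  obtain ⟨C, hC⟩ := exists_excess_le_of_distrib_ne_top hsphere hf hosc
  refine ⟨hfin, C, C.coe_nonneg, fun t ht => ?_, fun l hl hdl => ?_⟩
  · have hle : distrib μ f (rearr μ f t).toReal ≤ ENNReal.ofReal t :=
      (rearr_le_ofReal_iff ENNReal.toReal_nonneg).1 (ENNReal.ofReal_toReal (hfin t ht)).ge
    rw [ENNReal.ofReal_coe_nnreal]
    exact maxfn_sub_rearr_le hf hfin ht
      (hC _ ENNReal.toReal_nonneg (ne_top_of_le_ne_top ENNReal.ofReal_ne_top hle))
  · rw [ENNReal.ofReal_add hl C.coe_nonneg, ENNReal.ofReal_coe_nnreal]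
    exact setLIntegral_ofReal_abs_le_of_excess_le (hC l hl hdl.ne)

end BoundedMeanOscillation

section Cubes

variable {n : ℕ} {μ : Measure (Fin n → ℝ)}

lemma closedBall_eq_cube (x : Fin n → ℝ) {r : ℝ} (hr : 0 ≤ r) :
    closedBall x r = cube (fun j => x j - r) (2 * r) := by
  ext y
  simp only [mem_closedBall, dist_pi_le_iff hr, cube, mem_ofPred_eq, Real.dist_eq, abs_le]
  refine forall_congr' fun j => and_congr ?_ ?_ <;> constructor <;> intro h <;> linarith

lemma measure_sphere_eq_zero_of_hyperplane (hplane : ∀ (j : Fin n) (t : ℝ), μ {x | x j = t} = 0)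
    (x : Fin n → ℝ) (r : ℝ) (hr : 0 < r) : μ (sphere x r) = 0 := by
  refine measure_mono_null (t := ⋃ j, ({y | y j = x j + r} ∪ {y | y j = x j - r}))
    (fun y hy => ?_) (measure_iUnion_null fun j => measure_union_null (hplane j _) (hplane j _))
  obtain ⟨j, hj⟩ := ((dist_pi_eq_iff hr).1 (mem_sphere.1 hy)).1
  rw [Real.dist_eq, abs_eq hr.le, sub_eq_iff_eq_add', sub_eq_iff_eq_add', ← sub_eq_add_neg] at hj
  exact mem_iUnion.2 ⟨j, hj⟩

lemma hasBallOscillationLE_of_cube [IsLocallyFiniteMeasure μ] {f : (Fin n → ℝ) → ℝ} {K : ℝ}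
    (hloc : ∀ (a : Fin n → ℝ) (h : ℝ), 0 < h → IntegrableOn f (cube a h) μ)
    (hBMO : ∀ (a : Fin n → ℝ) (h : ℝ), 0 < h → 0 < μ (cube a h) →
      (⨍ y in cube a h, |f y - meanOn μ f (cube a h)| ∂μ) ≤ K) :
    HasBallOscillationLE μ f K.toNNReal := by
  intro x r hr
  have hfin : μ (closedBall x r) ≠ ⊤ := measure_closedBall_lt_top.ne
  rw [closedBall_eq_cube x hr.le] at hfin ⊢
  exact ⟨_, setLIntegral_ofReal_abs_sub_le_of_setAverage_le hfin (hloc _ _ (by positivity))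
    (hBMO _ _ (by positivity))⟩

end Cubes

/-- for a Radon measure `μ` on `ℝⁿ` giving no mass to hyperplanes orthogonal
to the coordinate axes, if `f ∈ BMO(μ)` and `d_{f,μ}(λ) < ∞` for all `λ > α`, then `f`
belongs to weak `L^∞(μ)`; in particular there is `M ≥ 0` with
`∫_{{|f| > λ}} |f| dμ ≤ (λ + M) d_{f,μ}(λ)` for all `λ > α`. -/
theorem stmt19 (n : ℕ) (μ : Measure (Fin n → ℝ)) [μ.Regular] [IsLocallyFiniteMeasure μ]
    (hplane : ∀ (j : Fin n) (t : ℝ), μ {x | x j = t} = 0)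
    (f : (Fin n → ℝ) → ℝ) (hf : Measurable f)
    (hloc : ∀ (a : Fin n → ℝ) (h : ℝ), 0 < h → IntegrableOn f (cube a h) μ)
    (K : ℝ)
    (hBMO : ∀ (a : Fin n → ℝ) (h : ℝ), 0 < h → 0 < μ (cube a h) →
      (⨍ y in cube a h, |f y - meanOn μ f (cube a h)| ∂μ) ≤ K)
    (α : ℝ) (hα : 0 ≤ α)
    (hdist : ∀ l : ℝ, α < l → distrib μ f l < ⊤) :
    (∀ t : ℝ, 0 < t → rearr μ f t ≠ ⊤) ∧
    (∃ M' : ℝ, 0 ≤ M' ∧ ∀ t : ℝ, 0 < t →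
      maxfn μ f t - rearr μ f t ≤ ENNReal.ofReal M') ∧
    (∃ M : ℝ, 0 ≤ M ∧ ∀ l : ℝ, α < l →
      ∫⁻ x in {x | l < |f x|}, ENNReal.ofReal |f x| ∂μ ≤
        ENNReal.ofReal (l + M) * distrib μ f l) := by
  obtain ⟨hrearr, M, hM, hmax, htail⟩ := stmt19_general
    (measure_sphere_eq_zero_of_hyperplane hplane) hf (hasBallOscillationLE_of_cube hloc hBMO)
    ⟨α + 1, hdist _ (lt_add_one α)⟩
  exact ⟨hrearr, ⟨M, hM, hmax⟩, M, hM, fun l hl => htail l (hα.trans hl.le) (hdist l hl)⟩
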